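/- arXiv:2506.24089 — 3 statements merged into one kernel-verified Lean document; each statement's English description precedes it below -/
import Mathlib

section
/- Let p be a prime, A a d×d matrix over ℤ_p, and E a d×d matrix over ℤ_p such that for every k ≥ 1 there exists N with A^{n!} ≡ E entrywise modulo p^k for all n ≥ N. Let λ ∈ ℤ_p, m ≥ 1 an integer, and v ∈ ℤ_p^d with (A − λ·I)^m v = 0. If λ is a unit of ℤ_p (equivalently ‖λ‖_p = 1) then E·v = v, and if λ is not a unit of ℤ_p (equivalently ‖λ‖_p < 1) then E·v = 0. -/
theorem aux_pow_sub_one_mem {R : Type*} [CommRing R] (J : Ideal R) (p : ℕ) (hp : (p : R) ∈ J)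
    (x : R) (hx : x - 1 ∈ J) (s : ℕ) : x ^ p ^ s - 1 ∈ J ^ (s + 1) := by
  induction s with
  | zero => simpa using hx
  | succ s ih =>
    have h1 : x ^ p ^ s - 1 ∈ J := Ideal.pow_le_self (Nat.succ_ne_zero s) ih
    generalize hy : x ^ p ^ s = y at ih h1
    have h2 : (∑ i ∈ Finset.range p, y ^ i) ∈ J := by
      have : (∑ i ∈ Finset.range p, y ^ i) = (∑ i ∈ Finset.range p, (y ^ i - 1)) + (p : R) := by
        simp
      rw [this]
      refine J.add_mem (J.sum_mem fun i _ => ?_) hp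
      obtain ⟨c, hc⟩ := sub_one_dvd_pow_sub_one y i
      rw [hc]
      exact J.mul_mem_right _ h1
    rw [pow_succ p s, pow_mul, hy, ← geom_sum_mul, pow_succ' J (s + 1)]
    exact Ideal.mul_mem_mul h2 ih

theorem aux_mem_apply {p : ℕ} [Fact p.Prime] {d : ℕ}
    (A : Matrix (Fin d) (Fin d) ℤ_[p])
    (lam : ℤ_[p]) (m k : ℕ) (v : Fin d → ℤ_[p])
    (hv : ((A - lam • (1 : Matrix (Fin d) (Fin d) ℤ_[p])) ^ m).mulVec v = 0)
    (f : Polynomial ℤ_[p])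
    (hf : f ∈ (Ideal.span {(p : Polynomial ℤ_[p])} ⊔
      Ideal.span {Polynomial.X - Polynomial.C lam}) ^ (k + m)) (i : Fin d) :
    (p : ℤ_[p]) ^ k ∣ ((Polynomial.aeval A f).mulVec v) i := by
  have h := Ideal.sup_pow_add_le_pow_sup_pow hf
  rw [Ideal.span_singleton_pow, Ideal.span_singleton_pow, Submodule.mem_sup] at h
  obtain ⟨a, ha, b, hb, rfl⟩ := h
  obtain ⟨a, rfl⟩ := Ideal.mem_span_singleton'.1 ha
  obtain ⟨b, rfl⟩ := Ideal.mem_span_singleton'.1 hb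
  have e1 : Polynomial.aeval A (Polynomial.X - Polynomial.C lam) =
      A - lam • (1 : Matrix (Fin d) (Fin d) ℤ_[p]) := by
    simp [Algebra.algebraMap_eq_smul_one]
  have e2 : (a * (p : Polynomial ℤ_[p]) ^ k) = ((p : ℤ_[p]) ^ k) • a := by
    rw [Polynomial.smul_eq_C_mul, mul_comm]; simp
  rw [e2, map_add, map_mul, map_pow, e1, Matrix.add_mulVec, ← Matrix.mulVec_mulVec, hv, map_smul,
    Matrix.smul_mulVec]
  simp

theorem aux_zero {p : ℕ} [Fact p.Prime] (x : ℤ_[p]) (h : ∀ k : ℕ, 1 ≤ k → (p : ℤ_[p]) ^ k ∣ x) :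
    x = 0 := by
  by_contra hx
  have : FiniteMultiplicity (p : ℤ_[p]) x :=
    FiniteMultiplicity.of_prime_left PadicInt.prime_p hx
  obtain ⟨n, hn⟩ := this
  exact hn (h (n + 1) (by omega))

theorem aux_lim {p : ℕ} [Fact p.Prime] {d : ℕ}
    (A E : Matrix (Fin d) (Fin d) ℤ_[p])
    (hconv : ∀ k : ℕ, 1 ≤ k → ∃ N : ℕ, ∀ n : ℕ, N ≤ n → ∀ i j : Fin d,
      (p : ℤ_[p]) ^ k ∣ (A ^ Nat.factorial n - E) i j) (v w : Fin d → ℤ_[p])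
    (h : ∀ k : ℕ, ∃ N : ℕ, ∀ n, N ≤ n → ∀ i,
      (p : ℤ_[p]) ^ k ∣ ((A ^ Nat.factorial n).mulVec v - w) i) : E.mulVec v = w := by
  funext i
  refine sub_eq_zero.1 (aux_zero _ fun k hk => ?_)
  obtain ⟨N, hN⟩ := hconv k hk
  obtain ⟨M, hM⟩ := h k
  have h1 := hM (max N M) (le_max_right _ _) i
  have h2 : (p : ℤ_[p]) ^ k ∣ ((A ^ Nat.factorial (max N M) - E).mulVec v) i := by
    simp only [Matrix.mulVec, dotProduct]
    exact Finset.dvd_sum fun j _ => Dvd.dvd.mul_right (hN _ (le_max_left _ _) i j) _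
  have := dvd_sub h1 h2
  rw [Matrix.sub_mulVec] at this
  simpa using this


/-- If `A ^ n!` converges entrywise `p`-adically to a matrix `E` over `ℤ_p`,
and `v` is a generalized eigenvector of `A` with eigenvalue `λ`, then `E v = v` when `λ` is a
unit of `ℤ_p`, and `E v = 0` when `λ` is not a unit. -/
theorem ordinary_projector_on_generalized_eigenspaces
    {p : ℕ} [Fact p.Prime] {d : ℕ}
    (A E : Matrix (Fin d) (Fin d) ℤ_[p])
    (hconv : ∀ k : ℕ, 1 ≤ k → ∃ N : ℕ, ∀ n : ℕ, N ≤ n → ∀ i j : Fin d,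
      (p : ℤ_[p]) ^ k ∣ (A ^ Nat.factorial n - E) i j)
    (lam : ℤ_[p]) (m : ℕ) (hm : 1 ≤ m) (v : Fin d → ℤ_[p])
    (hv : ((A - lam • (1 : Matrix (Fin d) (Fin d) ℤ_[p])) ^ m).mulVec v = 0) :
    (IsUnit lam → E.mulVec v = v) ∧ (¬ IsUnit lam → E.mulVec v = 0) := by
  have hpJ : (p : Polynomial ℤ_[p]) ∈ Ideal.span {(p : Polynomial ℤ_[p])} ⊔
      Ideal.span {Polynomial.X - Polynomial.C lam} :=
    Ideal.mem_sup_left (Ideal.mem_span_singleton_self _)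
  have hXJ : Polynomial.X - Polynomial.C lam ∈ Ideal.span {(p : Polynomial ℤ_[p])} ⊔
      Ideal.span {Polynomial.X - Polynomial.C lam} :=
    Ideal.mem_sup_right (Ideal.mem_span_singleton_self _)
  have key := fun k => aux_mem_apply A lam m k v hv
  generalize Ideal.span {(p : Polynomial ℤ_[p])} ⊔
      Ideal.span {Polynomial.X - Polynomial.C lam} = J at hpJ hXJ key
  have hC : ∀ c : ℤ_[p], (p : ℤ_[p]) ∣ c → Polynomial.C c ∈ J := by
    rintro c ⟨e, rfl⟩
    rw [map_mul]
    exact J.mul_mem_right _ (by simpa using hpJ)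
  have hp : p.Prime := Fact.out
  constructor
  · intro hu
    refine aux_lim A E hconv v v fun k => ⟨p ^ (k + m) + (p - 1) + p ^ (k + m), fun n hn i => ?_⟩
    have hd : (p - 1) * p ^ (k + m) ∣ Nat.factorial n := by
      have h1 : 0 < p ^ (k + m) := pow_pos hp.pos _
      have h2 : 0 < p - 1 := by have := hp.two_le; omega
      refine (mul_dvd_mul (Nat.dvd_factorial h2 le_rfl) (Nat.dvd_factorial h1 le_rfl)).trans ?_
      exact (Nat.factorial_mul_factorial_dvd_factorial_add _ _).trans
        (Nat.factorial_dvd_factorial (by omega))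
    have h3 : (p : ℤ_[p]) ∣ lam ^ (p - 1) - 1 := by
      rw [← Ideal.mem_span_singleton, ← PadicInt.maximalIdeal_eq_span_p, ← PadicInt.ker_toZMod,
        RingHom.mem_ker, map_sub, map_pow, map_one,
        ZMod.pow_card_sub_one_eq_one (hu.map PadicInt.toZMod).ne_zero, sub_self]
    have h4 : (Polynomial.X : Polynomial ℤ_[p]) ^ (p - 1) - 1 ∈ J := by
      obtain ⟨c, hc⟩ := sub_dvd_pow_sub_pow Polynomial.X (Polynomial.C lam) (p - 1)
      have := J.add_mem (J.mul_mem_right c hXJ) (hC _ h3)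
      rw [← hc] at this
      simpa using this
    have h5 := Ideal.pow_le_pow_right (Nat.le_succ _) (aux_pow_sub_one_mem J p hpJ _ h4 (k + m))
    rw [← pow_mul] at h5
    obtain ⟨c, hc⟩ := hd
    have h6 : (Polynomial.X : Polynomial ℤ_[p]) ^ Nat.factorial n - 1 ∈ J ^ (k + m) := by
      rw [hc, pow_mul]
      obtain ⟨e, he⟩ := sub_one_dvd_pow_sub_one
        ((Polynomial.X : Polynomial ℤ_[p]) ^ ((p - 1) * p ^ (k + m))) c
      rw [he]
      exact Ideal.mul_mem_right _ _ h5
    have := key k _ h6 i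
    simpa [Matrix.sub_mulVec] using this
  · intro hu
    refine aux_lim A E hconv v 0 fun k => ⟨k + m, fun n hn i => ?_⟩
    have h3 : (p : ℤ_[p]) ∣ lam := by
      rw [← Ideal.mem_span_singleton, ← PadicInt.maximalIdeal_eq_span_p]
      exact hu
    have h4 : (Polynomial.X : Polynomial ℤ_[p]) ∈ J := by
      simpa using J.add_mem hXJ (hC _ h3)
    have h6 : (Polynomial.X : Polynomial ℤ_[p]) ^ Nat.factorial n ∈ J ^ (k + m) :=
      Ideal.pow_le_pow_right (hn.trans (Nat.self_le_factorial n)) (Ideal.pow_mem_pow h4 _)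
    have := key k _ h6 i
    simpa using this
end

section
/- Let p be a prime and K a complete nonarchimedean normed field. Let X = ℚ_p \ {0} with the subspace topology from ℚ_p, and let χ : X → K \ {0} be a continuous map that is multiplicative: χ(xy) = χ(x)χ(y) for all x, y ∈ X. Then: (1) ‖χ(u)‖ = 1 for every u ∈ ℤ_p^× (every u ∈ ℤ_p with ‖u‖_p = 1); (2) the function f : X → K defined by f(x) = χ(x) for x ∈ ℤ_p \ {0} and f(x) = 0 for x ∉ ℤ_p is continuous; (3) f is bounded if and only if ‖χ(p)‖ ≤ 1; (4) f vanishes at infinity (for every ε > 0 there is a compact C ⊆ X with ‖f(x)‖ ≤ ε for x ∈ X \ C) if and only if ‖χ(p)‖ < 1. -/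
open scoped Classical

/-- `p` as a nonzero element of `ℚ_p`. -/
noncomputable def padicPrimeElt (p : ℕ) [Fact p.Prime] : {x : ℚ_[p] // x ≠ 0} :=
  ⟨(p : ℚ_[p]), by exact_mod_cast (Fact.out : p.Prime).ne_zero⟩

/-- The function `1_{ℤ_p} · χ : ℚ_p \ {0} → K`, equal to `χ` on `ℤ_p \ {0}` and `0`
outside `ℤ_p`. -/
noncomputable def indicatorMulChar (p : ℕ) [Fact p.Prime] {K : Type*} [NormedField K]
    (χ : {x : ℚ_[p] // x ≠ 0} → K) : {x : ℚ_[p] // x ≠ 0} → K :=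
  fun x => if ‖x.1‖ ≤ 1 then χ x else 0

lemma aux_annulus_compact (p : ℕ) [Fact p.Prime] (r : ℝ) (hr : 0 < r) :
    IsCompact {x : {x : ℚ_[p] // x ≠ 0} | r ≤ ‖x.1‖ ∧ ‖x.1‖ ≤ 1} := by
  rw [Subtype.isCompact_iff]
  have h : (Subtype.val '' {x : {x : ℚ_[p] // x ≠ 0} | r ≤ ‖x.1‖ ∧ ‖x.1‖ ≤ 1})
      = Metric.closedBall (0 : ℚ_[p]) 1 ∩ {x | r ≤ ‖x‖} := by
    ext x
    constructor
    · rintro ⟨y, ⟨h1, h2⟩, rfl⟩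
      exact ⟨by simpa using h2, h1⟩
    · rintro ⟨h1, h2⟩
      have h2' : r ≤ ‖x‖ := h2
      refine ⟨⟨x, norm_pos_iff.1 (lt_of_lt_of_le hr h2')⟩, ⟨h2', by simpa using h1⟩, rfl⟩
  rw [h]
  exact (isCompact_closedBall _ _).inter_right (isClosed_le continuous_const continuous_norm)

lemma aux_le_one_of_pow_le {c B : ℝ} (h : ∀ n : ℕ, c ^ n ≤ B) : c ≤ 1 := by
  by_contra hc
  obtain ⟨n, hn⟩ := pow_unbounded_of_one_lt B (not_le.1 hc)
  exact absurd (h n) (not_le.2 hn)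

/-- Let `χ : ℚ_p \ {0} → K \ {0}` be a continuous multiplicative map into a
complete nonarchimedean normed field. Then `‖χ(u)‖ = 1` for units `u`, the function
`f = 1_{ℤ_p} · χ` is continuous, `f` is bounded iff `‖χ(p)‖ ≤ 1`, and `f` vanishes at
infinity iff `‖χ(p)‖ < 1`. -/
theorem indicatorMulChar_properties
    (p : ℕ) [Fact p.Prime] {K : Type*} [NormedField K] [CompleteSpace K]
    (hK : ∀ a b : K, ‖a + b‖ ≤ max ‖a‖ ‖b‖)
    (χ : {x : ℚ_[p] // x ≠ 0} → K) (hne : ∀ x, χ x ≠ 0) (hcont : Continuous χ)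
    (hmul : ∀ (x y : ℚ_[p]) (hx : x ≠ 0) (hy : y ≠ 0),
      χ ⟨x * y, mul_ne_zero hx hy⟩ = χ ⟨x, hx⟩ * χ ⟨y, hy⟩) :
    (∀ u : {x : ℚ_[p] // x ≠ 0}, ‖u.1‖ = 1 → ‖χ u‖ = 1) ∧
    Continuous (indicatorMulChar p χ) ∧
    ((∃ B : ℝ, ∀ x, ‖indicatorMulChar p χ x‖ ≤ B) ↔ ‖χ (padicPrimeElt p)‖ ≤ 1) ∧
    ((∀ ε : ℝ, 0 < ε → ∃ C : Set {x : ℚ_[p] // x ≠ 0}, IsCompact C ∧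
        ∀ x ∉ C, ‖indicatorMulChar p χ x‖ ≤ ε) ↔ ‖χ (padicPrimeElt p)‖ < 1) := by
  have hone : χ ⟨1, one_ne_zero⟩ = 1 := by
    have h := hmul 1 1 one_ne_zero one_ne_zero
    simp only [mul_one] at h
    exact (mul_eq_left₀ (hne _)).1 h.symm
  have hpow : ∀ (x : ℚ_[p]) (hx : x ≠ 0) (n : ℕ),
      χ ⟨x ^ n, pow_ne_zero n hx⟩ = χ ⟨x, hx⟩ ^ n := by
    intro x hx n
    induction n with
    | zero => simpa using hone
    | succ k ih =>
      have h := hmul (x ^ k) x (pow_ne_zero k hx) hx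
      rw [ih] at h
      simpa only [pow_succ] using h
  have hp0 : (p : ℚ_[p]) ≠ 0 := (padicPrimeElt p).2
  have hp1 : (1 : ℝ) < p := by exact_mod_cast (Fact.out : p.Prime).one_lt
  -- units
  obtain ⟨M, hM⟩ : ∃ M : ℝ, ∀ u : {x : ℚ_[p] // x ≠ 0}, ‖u.1‖ = 1 → ‖χ u‖ ≤ M := by
    obtain ⟨M, hM⟩ := (aux_annulus_compact p 1 one_pos).exists_bound_of_continuousOn
      hcont.continuousOn
    exact ⟨M, fun u hu => hM u ⟨hu.ge, hu.le⟩⟩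
  have hle : ∀ u : {x : ℚ_[p] // x ≠ 0}, ‖u.1‖ = 1 → ‖χ u‖ ≤ 1 := by
    rintro ⟨u, hu0⟩ hu
    refine aux_le_one_of_pow_le (B := M) fun n => ?_
    rw [← norm_pow, ← hpow u hu0 n]
    apply hM
    simp only at hu
    simp [hu]
  have hunit : ∀ u : {x : ℚ_[p] // x ≠ 0}, ‖u.1‖ = 1 → ‖χ u‖ = 1 := by
    rintro ⟨u, hu0⟩ hu
    refine le_antisymm (hle _ hu) ?_
    have h1 := hle ⟨u⁻¹, inv_ne_zero hu0⟩ (by simp only at hu; simp [hu])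
    have h2 := hmul u u⁻¹ hu0 (inv_ne_zero hu0)
    simp only [mul_inv_cancel₀ hu0, hone] at h2
    have h3 : 1 = ‖χ ⟨u, hu0⟩‖ * ‖χ ⟨u⁻¹, inv_ne_zero hu0⟩‖ := by
      rw [← norm_mul, ← h2, norm_one]
    rw [h3]
    exact mul_le_of_le_one_right (norm_nonneg _) h1
  set c : ℝ := ‖χ (padicPrimeElt p)‖ with hc
  have hc0 : 0 ≤ c := norm_nonneg _
  have hppow : ∀ n : ℕ, ‖indicatorMulChar p χ ⟨(p : ℚ_[p]) ^ n, pow_ne_zero n hp0⟩‖ = c ^ n := by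
    intro n
    have h : ‖(p : ℚ_[p]) ^ n‖ ≤ 1 := by
      rw [norm_pow]
      exact pow_le_one₀ (norm_nonneg _) Padic.norm_p_lt_one.le
    simp only [indicatorMulChar, h, if_true]
    rw [hpow _ hp0, norm_pow]
    rfl
  have hdec : ∀ x : {x : ℚ_[p] // x ≠ 0}, ‖x.1‖ ≤ 1 →
      ∃ n : ℕ, ‖x.1‖ = ((p : ℝ)⁻¹) ^ n ∧ ‖χ x‖ = c ^ n := by
    rintro ⟨x, hx0⟩ hx
    simp only at hx
    have hv := Padic.norm_eq_zpow_neg_valuation hx0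
    have hv0 : 0 ≤ x.valuation := by
      rw [hv] at hx
      by_contra hlt
      exact absurd hx (not_le.2 (one_lt_zpow₀ hp1 (by omega)))
    obtain ⟨n, hn⟩ := Int.eq_ofNat_of_zero_le hv0
    have hxn : ‖x‖ = ((p : ℝ)⁻¹) ^ n := by
      rw [hv, hn, zpow_neg, zpow_natCast, inv_pow]
    refine ⟨n, hxn, ?_⟩
    have hpn : (p : ℚ_[p]) ^ n ≠ 0 := pow_ne_zero n hp0
    have hu0 : x / (p : ℚ_[p]) ^ n ≠ 0 := div_ne_zero hx0 hpn
    have hu : ‖x / (p : ℚ_[p]) ^ n‖ = 1 := by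
      rw [norm_div, norm_pow, Padic.norm_p, hxn]
      exact div_self (by positivity)
    have h := hmul _ _ hu0 hpn
    simp only [div_mul_cancel₀ x hpn] at h
    rw [h, norm_mul, hunit _ hu, hpow _ hp0, norm_pow, one_mul]
    rfl
  refine ⟨hunit, ?_, ⟨?_, ?_⟩, ⟨?_, ?_⟩⟩
  · have hclo : IsClopen {x : {x : ℚ_[p] // x ≠ 0} | ‖x.1‖ ≤ 1} := by
      have h := (IsUltrametricDist.isClopen_closedBall (0 : ℚ_[p]) one_ne_zero).preimage
        (continuous_subtype_val (p := fun x : ℚ_[p] => x ≠ 0))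
      convert h using 1
      ext x
      simp
    refine Continuous.if ?_ hcont continuous_const
    intro a ha
    rw [hclo.frontier_eq] at ha
    exact ha.elim
  · rintro ⟨B, hB⟩
    exact aux_le_one_of_pow_le (B := B) fun n => hppow n ▸ hB _
  · intro h
    refine ⟨1, fun x => ?_⟩
    by_cases hx : ‖x.1‖ ≤ 1
    · obtain ⟨n, -, hn⟩ := hdec x hx
      simp only [indicatorMulChar, hx, if_true, hn]
      exact pow_le_one₀ hc0 h
    · simp [indicatorMulChar, hx]
  · intro h
    by_contra hc1
    have hc1 : 1 ≤ c := not_lt.1 hc1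
    obtain ⟨C, hC, hCe⟩ := h (1 / 2) (by norm_num)
    have hmem : ∀ n : ℕ, (⟨(p : ℚ_[p]) ^ n, pow_ne_zero n hp0⟩ : {x : ℚ_[p] // x ≠ 0}) ∈ C := by
      intro n
      by_contra hn
      have h1 := hCe _ hn
      rw [hppow] at h1
      have h2 : 1 ≤ c ^ n := one_le_pow₀ hc1
      linarith
    obtain ⟨y, hy, hmin⟩ := hC.exists_isMinOn ⟨_, hmem 0⟩
      (continuous_norm.comp continuous_subtype_val).continuousOn
    obtain ⟨n, hn⟩ := exists_pow_lt_of_lt_one (norm_pos_iff.2 y.2)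
      (Padic.norm_p_lt_one (p := p))
    have h1 : ‖y.1‖ ≤ ‖(p : ℚ_[p]) ^ n‖ := hmin (hmem n)
    rw [norm_pow] at h1
    exact absurd h1 (not_le.2 hn)
  · intro h ε hε
    obtain ⟨N, hN⟩ := exists_pow_lt_of_lt_one hε h
    refine ⟨_, aux_annulus_compact p (((p : ℝ)⁻¹) ^ N) (by positivity), fun x hxC => ?_⟩
    by_cases hx : ‖x.1‖ ≤ 1
    · obtain ⟨n, hxn, hn⟩ := hdec x hx
      simp only [indicatorMulChar, hx, if_true, hn]
      have hNn : N ≤ n := by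
        by_contra hlt
        apply hxC
        refine ⟨?_, hx⟩
        rw [hxn]
        exact pow_le_pow_of_le_one (by positivity) (inv_le_one_of_one_le₀ hp1.le) (by omega)
      exact (pow_le_pow_of_le_one hc0 h.le hNn).trans hN.le
    · simp [indicatorMulChar, hx, hε.le]
end

section
/- Let p be a prime, K a nonarchimedean normed field of characteristic zero, α ∈ K with α ≠ 0, and m ≥ 1 an integer. Let X = ℤ_p \ {0} with the subspace topology, and define the operator U_p on K-valued functions on X by (U_p g)(x) = g(p·x). Let f : X → K be continuous with (U_p − α)^m f = 0, i.e. applying the map g ↦ U_p g − α·g to f a total of m times yields the zero function. Then there exist continuous functions f_1, …, f_m : ℤ_p^× → K such that for every integer k ≥ 0 and every u ∈ ℤ_p^×, f(p^k · u) = Σ_{i=1}^m f_i(u) · α^k · k^{i−1}. -/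
/-- `p` is nonzero in `ℤ_p`. -/
lemma padicInt_p_ne_zero (p : ℕ) [Fact p.Prime] : (p : ℤ_[p]) ≠ 0 := by
  exact_mod_cast (Fact.out : p.Prime).ne_zero

/-- The operator `U_p` on `K`-valued functions on `ℤ_p \ {0}`: `(U_p g)(x) = g (p • x)`. -/
noncomputable def UpOp (p : ℕ) [Fact p.Prime] {K : Type*} [NormedField K]
    (g : {x : ℤ_[p] // x ≠ 0} → K) : {x : ℤ_[p] // x ≠ 0} → K :=
  fun x => g ⟨(p : ℤ_[p]) * x.1, mul_ne_zero (padicInt_p_ne_zero p) x.2⟩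

/-- The element `p ^ k · u` of `ℤ_p \ {0}`, for `u ∈ ℤ_p^×`. -/
noncomputable def padicPowUnit (p : ℕ) [Fact p.Prime] (k : ℕ) (u : {u : ℤ_[p] // ‖u‖ = 1}) :
    {x : ℤ_[p] // x ≠ 0} :=
  ⟨(p : ℤ_[p]) ^ k * u.1,
    mul_ne_zero (pow_ne_zero k (padicInt_p_ne_zero p))
      (fun h => by have := u.2; rw [h, norm_zero] at this; exact one_ne_zero this.symm)⟩

/-- `U_p` as a linear endomorphism. -/
noncomputable def UpLin (p : ℕ) [Fact p.Prime] (K : Type*) [NormedField K] :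
    Module.End K ({x : ℤ_[p] // x ≠ 0} → K) where
  toFun := UpOp p
  map_add' _ _ := rfl
  map_smul' _ _ := rfl

lemma UpLin_pow_apply (p : ℕ) [Fact p.Prime] {K : Type*} [NormedField K] (k : ℕ)
    (f : {x : ℤ_[p] // x ≠ 0} → K) (u : {u : ℤ_[p] // ‖u‖ = 1}) :
    (UpLin p K ^ k) f (padicPowUnit p 0 u) = f (padicPowUnit p k u) := by
  induction k generalizing f with
  | zero => simp
  | succ k ih =>
    rw [pow_succ, Module.End.mul_apply, ih]
    change f _ = f _
    congr 1
    apply Subtype.ext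
    simp only [padicPowUnit]
    ring

lemma choose_eq_poly {K : Type*} [Field K] [CharZero K] (k j m : ℕ) (h : j < m) :
    (k.choose j : K) = ∑ i : Fin m,
      ((j.factorial : K)⁻¹ * (descPochhammer K j).coeff (i : ℕ)) * (k : K) ^ (i : ℕ) := by
  have h1 : (descPochhammer K j).eval (k : K) = (j.factorial : K) * (k.choose j : K) := by
    rw [descPochhammer_eval_eq_descFactorial, Nat.descFactorial_eq_factorial_mul_choose]
    push_cast
    rfl
  have h2 : (descPochhammer K j).natDegree < m := by
    rw [descPochhammer_natDegree]
    exact h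
  rw [Polynomial.eval_eq_sum_range' h2, Finset.sum_range] at h1
  have h3 : (j.factorial : K) ≠ 0 := by exact_mod_cast j.factorial_ne_zero
  simp only [mul_assoc]
  rw [← Finset.mul_sum, h1, inv_mul_cancel_left₀ h3]

/-- A continuous function `f` on `ℤ_p \ {0}` killed by `(U_p − α) ^ m`
(with `α ≠ 0`) is of the form `f(p^k·u) = Σ_{i=1}^m f_i(u)·α^k·k^{i−1}` for continuous
functions `f_1, …, f_m` on `ℤ_p^×`. -/
theorem generalized_Up_eigenfunction_structure
    (p : ℕ) [Fact p.Prime] {K : Type*} [NormedField K] [CharZero K]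
    (hK : ∀ a b : K, ‖a + b‖ ≤ max ‖a‖ ‖b‖)
    (α : K) (hα : α ≠ 0) (m : ℕ) (hm : 1 ≤ m)
    (f : {x : ℤ_[p] // x ≠ 0} → K) (hf : Continuous f)
    (heig : (fun g : {x : ℤ_[p] // x ≠ 0} → K => UpOp p g - α • g)^[m] f = 0) :
    ∃ fs : Fin m → ({u : ℤ_[p] // ‖u‖ = 1} → K),
      (∀ i, Continuous (fs i)) ∧
      ∀ (k : ℕ) (u : {u : ℤ_[p] // ‖u‖ = 1}),
        f (padicPowUnit p k u) = ∑ i : Fin m, fs i u * α ^ k * (k : K) ^ (i : ℕ) := by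
  let T : Module.End K ({x : ℤ_[p] // x ≠ 0} → K) := UpLin p K - α • 1
  have hT : ∀ n, (fun g : {x : ℤ_[p] // x ≠ 0} → K => UpOp p g - α • g)^[n] f = (T ^ n) f := by
    intro n
    rw [Module.End.pow_apply]
    rfl
  have hTm : (T ^ m) f = 0 := by rw [← hT, heig]
  have hvan : ∀ j, m ≤ j → (T ^ j) f = 0 := by
    intro j hj
    obtain ⟨d, rfl⟩ := Nat.exists_eq_add_of_le' hj
    rw [pow_add, Module.End.mul_apply, hTm, map_zero]
  have hcont : ∀ n, Continuous ((T ^ n) f) := by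
    intro n
    induction n with
    | zero => simpa using hf
    | succ n ih =>
      rw [pow_succ', Module.End.mul_apply]
      change Continuous (UpOp p ((T ^ n) f) - α • ((T ^ n) f))
      refine Continuous.sub ?_ (ih.const_smul α)
      unfold UpOp
      exact ih.comp (by fun_prop)
  have hpu : Continuous (padicPowUnit p 0) := by
    unfold padicPowUnit
    fun_prop
  have key : ∀ (k : ℕ) (u : {u : ℤ_[p] // ‖u‖ = 1}), f (padicPowUnit p k u) =
      ∑ j ∈ Finset.range m,
        (k.choose j : K) * (α ^ k * α⁻¹ ^ j * (T ^ j) f (padicPowUnit p 0 u)) := by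
    intro k u
    have hU : UpLin p K = T + α • 1 := by simp [T]
    have hc : Commute T (α • 1) := (Commute.one_right T).smul_right α
    have hk : f (padicPowUnit p k u) = ∑ j ∈ Finset.range (k + 1),
        (k.choose j : K) * (α ^ k * α⁻¹ ^ j * (T ^ j) f (padicPowUnit p 0 u)) := by
      rw [← UpLin_pow_apply p k f u, hU, hc.add_pow, LinearMap.sum_apply, Finset.sum_apply]
      refine Finset.sum_congr rfl fun j hj => ?_
      have hjk : j ≤ k := Nat.lt_succ_iff.mp (Finset.mem_range.mp hj)
      have e : α ^ k * α⁻¹ ^ j = α ^ (k - j) := by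
        rw [pow_sub₀ α hα hjk, inv_pow]
      rw [e, smul_pow, one_pow, ← nsmul_eq_mul']
      simp
      ring
    rw [hk]
    have hA : ∀ j, k + 1 ≤ j →
        (k.choose j : K) * (α ^ k * α⁻¹ ^ j * (T ^ j) f (padicPowUnit p 0 u)) = 0 := by
      intro j hj
      rw [Nat.choose_eq_zero_of_lt hj]
      simp
    have hB : ∀ j, m ≤ j →
        (k.choose j : K) * (α ^ k * α⁻¹ ^ j * (T ^ j) f (padicPowUnit p 0 u)) = 0 := by
      intro j hj
      rw [hvan j hj]
      simp
    rcases le_total (k + 1) m with h | h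
    · exact (Finset.eventually_constant_sum hA h).symm
    · exact Finset.eventually_constant_sum hB h
  refine ⟨fun i u => ∑ j ∈ Finset.range m,
    ((j.factorial : K)⁻¹ * (descPochhammer K j).coeff (i : ℕ)) *
      (α⁻¹ ^ j * (T ^ j) f (padicPowUnit p 0 u)), ?_, ?_⟩
  · intro i
    refine continuous_finsetSum _ fun j _ => ?_
    exact continuous_const.mul (continuous_const.mul ((hcont j).comp hpu))
  · intro k u
    rw [key]
    simp only [Finset.sum_mul]
    rw [Finset.sum_comm]
    refine Finset.sum_congr rfl fun j hj => ?_
    rw [choose_eq_poly k j m (Finset.mem_range.mp hj), Finset.sum_mul]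
    refine Finset.sum_congr rfl fun i _ => ?_
    ring
end
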